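/- arXiv:2508.11533 — 2 statements merged into one kernel-verified Lean document; each statement's English description precedes it below -/
import Mathlib

section
/- Ellipsoidal parametrization of the consistency set: let 𝐀 ∈ ℝ^{p×p} be symmetric positive definite, 𝐐 ∈ ℝ^{N×N} symmetric positive semidefinite, and 𝛇 ∈ ℝ^{p×N}. Then {𝐙 ∈ ℝ^{p×N} : (𝐙 − 𝛇)ᵀ𝐀(𝐙 − 𝛇) ⪯ 𝐐} = {𝛇 + 𝐀^{−1/2} 𝛄 𝐐^{1/2} : 𝛄 ∈ ℝ^{p×N}, ‖𝛄‖ ≤ 1}, where 𝐀^{1/2} and 𝐐^{1/2} denote the positive semidefinite square roots of 𝐀 and 𝐐, 𝐀^{−1/2} = (𝐀^{1/2})⁻¹, and ‖·‖ is the spectral norm. -/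
open Matrix
open scoped Matrix.Norms.L2Operator MatrixOrder

/-!
Write `A = RᴴR` and `Q = SᴴS` with `R = A^{1/2}` and `S = Q^{1/2}`. With `W = R (Z - ζ)`, the
constraint `(Z - ζ)ᴴ A (Z - ζ) ⪯ Q` reads `WᴴW ⪯ SᴴS`, that is, `‖W x‖ ≤ ‖S x‖` for all `x`.
Hence `S x ↦ W x` is a well-defined contraction on the range of `S`; extending it by zero on the
orthogonal complement gives `γ` with `‖γ‖ ≤ 1` and `W = γ S` (Douglas' factorization), and
`Z` is recovered as `ζ + R⁻¹ W`.
-/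

section Douglas

variable {𝕜 E F G : Type*} [RCLike 𝕜]
  [NormedAddCommGroup E] [InnerProductSpace 𝕜 E] [CompleteSpace E]
  [AddCommGroup F] [Module 𝕜 F]
  [NormedAddCommGroup G] [NormedSpace 𝕜 G] [CompleteSpace G]

theorem exists_opNorm_le_comp_eq_iff (L : F →ₗ[𝕜] E) (M : F →ₗ[𝕜] G) {C : ℝ} (hC : 0 ≤ C) :
    (∃ g : E →L[𝕜] G, ‖g‖ ≤ C ∧ g.toLinearMap ∘ₗ L = M) ↔ ∀ x, ‖M x‖ ≤ C * ‖L x‖ := by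
  constructor
  · rintro ⟨g, hg, rfl⟩ x
    exact g.le_of_opNorm_le hg (L x)
  · intro hML
    let K : Submodule 𝕜 E := L.range.topologicalClosure
    let L' : F →ₗ[𝕜] K := L.codRestrict K fun x ↦ subset_closure (L.mem_range_self x)
    have hdense : DenseRange L' :=
      ((denseRange_inclusion_iff subset_closure).2 subset_rfl).comp
        L.surjective_rangeRestrict.denseRange (continuous_inclusion subset_closure)
    refine ⟨M.extendOfNorm L' ∘L K.orthogonalProjectionOnto, ?_, ?_⟩
    · calc ‖M.extendOfNorm L' ∘L K.orthogonalProjectionOnto‖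
          ≤ ‖M.extendOfNorm L'‖ * ‖K.orthogonalProjectionOnto‖ :=
            ContinuousLinearMap.opNorm_comp_le _ _
        _ ≤ C * 1 := by
            gcongr
            · exact LinearMap.opNorm_extendOfNorm_le hdense hC hML
            · exact K.orthogonalProjectionOnto_norm_le
        _ = C := mul_one C
    · ext x
      have hproj : K.orthogonalProjectionOnto (L x) = L' x :=
        K.orthogonalProjectionOnto_mem_subspace_eq_self (L' x)
      simpa [hproj] using LinearMap.extendOfNorm_eq hdense ⟨C, hML⟩ x

end Douglas

theorem star_sqrt_mul_sqrt {A : Type*} [PartialOrder A] [NonUnitalRing A] [TopologicalSpace A]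
    [StarRing A] [Module ℝ A] [SMulCommClass ℝ A A] [IsScalarTower ℝ A A] [StarOrderedRing A]
    [NonUnitalContinuousFunctionalCalculus ℝ A IsSelfAdjoint] [NonnegSpectrumClass ℝ A]
    [IsSemitopologicalRing A] [T2Space A] {a : A} (ha : 0 ≤ a) :
    star (CFC.sqrt a) * CFC.sqrt a = a := by
  rw [(CFC.sqrt_nonneg a).isSelfAdjoint.star_eq, CFC.sqrt_mul_sqrt_self a ha]

section Loewner

open scoped ComplexOrder

variable {𝕜 l m n : Type*} [RCLike 𝕜] [Fintype l] [Fintype m]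

theorem star_dotProduct_conjTranspose_mul_self_mulVec [Fintype n] [DecidableEq n]
    (B : Matrix m n 𝕜) (x : n → 𝕜) :
    star x ⬝ᵥ ((Bᴴ * B) *ᵥ x) = ((‖toEuclideanLin B (WithLp.toLp 2 x)‖ ^ 2 : ℝ) : 𝕜) := by
  rw [← mulVec_mulVec, dotProduct_mulVec, vecMul_conjTranspose, star_star, RCLike.ofReal_pow,
    ← inner_self_eq_norm_sq_to_K, EuclideanSpace.inner_eq_star_dotProduct, dotProduct_comm,
    toLpLin_toLp, toLin'_apply]

theorem conjTranspose_mul_self_le_iff_norm_le [Fintype n] [DecidableEq n]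
    (W : Matrix m n 𝕜) (B : Matrix l n 𝕜) :
    Wᴴ * W ≤ Bᴴ * B ↔ ∀ x, ‖toEuclideanLin W x‖ ≤ ‖toEuclideanLin B x‖ := by
  have hherm : (Bᴴ * B - Wᴴ * W).IsHermitian :=
    (isHermitian_conjTranspose_mul_self B).sub (isHermitian_conjTranspose_mul_self W)
  rw [le_iff, posSemidef_iff_dotProduct_mulVec, and_iff_right hherm]
  refine (WithLp.equiv 2 (n → 𝕜)).symm.forall_congr fun x ↦ ?_
  rw [sub_mulVec, dotProduct_sub, sub_nonneg, star_dotProduct_conjTranspose_mul_self_mulVec,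
    star_dotProduct_conjTranspose_mul_self_mulVec, RCLike.ofReal_le_ofReal,
    sq_le_sq₀ (norm_nonneg _) (norm_nonneg _), WithLp.equiv_symm_apply]

theorem conjTranspose_mul_self_le_iff_exists_eq_mul [DecidableEq l] [Finite n]
    (W : Matrix m n 𝕜) (B : Matrix l n 𝕜) :
    Wᴴ * W ≤ Bᴴ * B ↔ ∃ γ : Matrix m l 𝕜, ‖γ‖ ≤ 1 ∧ W = γ * B := by
  classical
  have := Fintype.ofFinite n
  have hdouglas := exists_opNorm_le_comp_eq_iff (toEuclideanLin B) (toEuclideanLin W) zero_le_one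
  simp only [one_mul] at hdouglas
  rw [conjTranspose_mul_self_le_iff_norm_le, ← hdouglas,
    ((toEuclideanLin (𝕜 := 𝕜) (m := m) (n := l)).trans
      LinearMap.toContinuousLinearMap).surjective.exists]
  refine exists_congr fun γ ↦ and_congr Iff.rfl ?_
  rw [← toEuclideanLin.injective.eq_iff, eq_comm]
  simp [toEuclideanLin, toLpLin_mul_same]

theorem conjTranspose_sub_mul_mul_sub_le_iff_exists [DecidableEq l] [DecidableEq m] [Finite n]
    {R : Matrix m m 𝕜} (hR : IsUnit R) (S : Matrix l n 𝕜) (Z ζ : Matrix m n 𝕜) :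
    (Z - ζ)ᴴ * (Rᴴ * R) * (Z - ζ) ≤ Sᴴ * S ↔
      ∃ γ : Matrix m l 𝕜, ‖γ‖ ≤ 1 ∧ Z = ζ + R⁻¹ * γ * S := by
  have hdet : IsUnit R.det := (isUnit_iff_isUnit_det R).1 hR
  have hsq : (Z - ζ)ᴴ * (Rᴴ * R) * (Z - ζ) = (R * (Z - ζ))ᴴ * (R * (Z - ζ)) := by
    simp only [conjTranspose_mul, Matrix.mul_assoc]
  have hsolve (γ : Matrix m l 𝕜) : R * (Z - ζ) = γ * S ↔ Z = ζ + R⁻¹ * γ * S := by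
    rw [← sub_eq_iff_eq_add', Matrix.mul_assoc]
    constructor
    · intro h
      rw [← h, nonsing_inv_mul_cancel_left _ _ hdet]
    · intro h
      rw [h, mul_nonsing_inv_cancel_left _ _ hdet]
  simp only [hsq, conjTranspose_mul_self_le_iff_exists_eq_mul, hsolve]

theorem consistency_set_ellipsoid_general [DecidableEq m] [Fintype n] [DecidableEq n]
    {A : Matrix m m 𝕜} (hA : A.PosDef) {Q : Matrix n n 𝕜} (hQ : Q.PosSemidef)
    (ζ : Matrix m n 𝕜) :
    {Z : Matrix m n 𝕜 | (Z - ζ)ᴴ * A * (Z - ζ) ≤ Q} =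
      {Z : Matrix m n 𝕜 | ∃ γ : Matrix m n 𝕜, ‖γ‖ ≤ 1 ∧
        Z = ζ + (CFC.sqrt A)⁻¹ * γ * CFC.sqrt Q} := by
  have hunit : IsUnit (CFC.sqrt A) := hA.isStrictlyPositive.isUnit_cfcSqrt
  have hAsqrt : (CFC.sqrt A)ᴴ * CFC.sqrt A = A := star_sqrt_mul_sqrt hA.posSemidef.nonneg
  have hQsqrt : (CFC.sqrt Q)ᴴ * CFC.sqrt Q = Q := star_sqrt_mul_sqrt hQ.nonneg
  ext Z
  simpa only [hAsqrt, hQsqrt, Set.mem_ofPred_eq]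
    using conjTranspose_sub_mul_mul_sub_le_iff_exists hunit (CFC.sqrt Q) Z ζ

end Loewner

/-- **Ellipsoidal parametrization of the consistency set.**
For symmetric `𝐀 ≻ 0`, symmetric `𝐐 ⪰ 0` and `𝛇`:
`{𝐙 : (𝐙 − 𝛇)ᵀ𝐀(𝐙 − 𝛇) ⪯ 𝐐} = {𝛇 + 𝐀^{−1/2} 𝛄 𝐐^{1/2} : ‖𝛄‖ ≤ 1}`,
with `‖·‖` the spectral (ℓ²-operator) norm and the positive semidefinite square
roots `𝐀^{1/2}`, `𝐐^{1/2}`. -/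
theorem consistency_set_ellipsoid {p N : ℕ}
    (mA : Matrix (Fin p) (Fin p) ℝ) (hA : mA.IsSymm) (hApd : mA.PosDef)
    (Q : Matrix (Fin N) (Fin N) ℝ) (hQ : Q.IsSymm) (hQpsd : Q.PosSemidef)
    (ζ : Matrix (Fin p) (Fin N) ℝ) :
    {mZ : Matrix (Fin p) (Fin N) ℝ | (Q - (mZ - ζ)ᵀ * mA * (mZ - ζ)).PosSemidef} =
      {mZ : Matrix (Fin p) (Fin N) ℝ |
        ∃ γ : Matrix (Fin p) (Fin N) ℝ, ‖γ‖ ≤ 1 ∧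
          mZ = ζ + (CFC.sqrt mA)⁻¹ * γ * CFC.sqrt Q} := by
  simpa only [conjTranspose_eq_transpose_of_trivial, le_iff] using
    consistency_set_ellipsoid_general hApd hQpsd ζ
end

section
/- Matrix-analytic core of Theorem 1 (direct data-driven control, single-input case): let N, T be positive integers, Z₀ ∈ ℝ^{N×T}, U₀ ∈ ℝ^{1×T}, V₀ ∈ ℝ^{N×T}, Z₁ ∈ ℝ^{N×T}, Δ ∈ ℝ^{N×N}; let W₀ ∈ ℝ^{(2N+1)×T} be the vertical stack of Z₀, U₀, V₀ and set 𝐀 = W₀W₀ᵀ, 𝐁 = −W₀Z₁ᵀ, 𝐂 = Z₁Z₁ᵀ − ΔΔᵀ. Assume W₀ has full row rank. Let P ∈ ℝ^{N×N} be symmetric positive definite, L ∈ ℝ^{N×1}, and let μ, ν, τ, c, c₁, c₂, α, β be positive scalars with 1/α + 1/β = 1. Let M₁ ∈ ℝ^{(2N+1)×N} be the vertical stack of P, Lᵀ, 0_{N×N} and M₂ ∈ ℝ^{(2N+1)×N} the vertical stack of 0_{N×N}, 0_{1×N}, P. Suppose the symmetric block matrix G with block rows/columns of sizes (N, N, 2N+1,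 1, N, 1) given by G₁₁ = −(1/μ)𝐂 + τI_N, G₁₂ = 0, G₁₃ = (M₁ − (1/μ)𝐁)ᵀ, G₁₄ = L, G₁₅ = P, G₁₆ = L, G₂₂ = −(1/ν)P, G₂₃ = −M₂ᵀ, G₂₄ = G₂₅ = G₂₆ = 0, G₃₃ = −(1/μ)𝐀, G₃₄ = G₃₅ = G₃₆ = 0, G₄₄ = −ν/c, G₅₅ = −(τ/(αc₁²))I_N, G₆₆ = −τ/(βc₂²), G₄₅ = G₄₆ = G₅₆ = 0 (the remaining blocks determined by symmetry) is negative definite. Then for every A ∈ ℝ^{N×N}, B₀ ∈ ℝ^{N×1}, B₁ ∈ ℝ^{N×N} and every D₀ ∈ ℝ^{N×T} with D₀D₀ᵀ ⪯ ΔΔᵀ and Z₁ = AZ₀ + B₀U₀ + B₁V₀ + D₀, it holds that PAᵀ + AP + LB₀ᵀ + B₀Lᵀ + νB₁PB₁ᵀ + τI_N + ν⁻¹cLLᵀ + τ⁻¹(αc₁²P² + βc₂²LLᵀ) ≺ 0. -/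
open Matrix

/-!
Stack a consistent system as `Θ = [A B₀ B₁]`, let `-ρ₁I`, `-ρ₂I`, `-ρ₃I` be the last three diagonal
blocks of `G`, and evaluate the quadratic form of `G` on the block column
`(I, -νB₁ᵀ, Θᵀ, ρ₁⁻¹Lᵀ, ρ₂⁻¹Pᵀ, ρ₃⁻¹Lᵀ)`. The third block is the unknown system itself; given it,
the others are those of the Schur complement. The terms in `μ⁻¹` collect into the quadratic matrix
polynomial of the data at `Θ`, which is `D₀D₀ᵀ - ΔΔᵀ ⪯ 0`, and the remaining ones form the
robust-stabilization matrix.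
-/

variable {n m p r k q t F R : Type*}

section BlockCongruence

theorem fromCols_mul_fromBlocks_mul_fromRows [Fintype m] [Fintype n] [Fintype p] [Fintype r]
    [Semiring R] (X' : Matrix q m R) (Y' : Matrix q n R) (A : Matrix m p R)
    (B : Matrix m r R) (C : Matrix n p R) (D : Matrix n r R) (X : Matrix p k R)
    (Y : Matrix r k R) :
    fromCols X' Y' * fromBlocks A B C D * fromRows X Y =
      X' * A * X + X' * B * Y + Y' * C * X + Y' * D * Y := by
  rw [← fromRows_fromCols_eq_fromBlocks, fromCols_mul_fromRows, Matrix.add_mul, Matrix.mul_assoc,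
    Matrix.mul_assoc, fromCols_mul_fromRows, fromCols_mul_fromRows]
  simp only [Matrix.mul_add, Matrix.mul_assoc, add_assoc]

theorem posDef_conjTranspose_fromRows_one_mul_mul_fromRows_one [Fintype m] [Fintype n]
    [DecidableEq m] [Ring R] [PartialOrder R] [StarRing R] {H : Matrix (m ⊕ n) (m ⊕ n) R}
    (hH : H.PosDef) (S : Matrix n m R) :
    ((fromRows (1 : Matrix m m R) S)ᴴ * H * fromRows (1 : Matrix m m R) S).PosDef :=
  hH.conjTranspose_mul_mul_same fun x y hxy => by
    simpa [fromRows_mulVec] using congrArg (· ∘ Sum.inl) hxy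

end BlockCongruence

section DataPolynomial

variable [Fintype k]

/-- The quadratic matrix polynomial of the data matrices `mA`, `mB`, `mC`; it is negative
semidefinite at `Θ` when the system `Θ` is consistent with the data. -/
def dataPolynomial [CommRing R] (mA : Matrix k k R) (mB : Matrix k n R) (mC : Matrix n n R)
    (Θ : Matrix n k R) : Matrix n n R :=
  mC + Θ * mB + mBᵀ * Θᵀ + Θ * mA * Θᵀ

theorem dataPolynomial_eq_residual_sub_noise [Fintype t] [Fintype q] [CommRing R]
    (W : Matrix k t R) (Z : Matrix n t R) (Δ : Matrix n q R) (Θ : Matrix n k R) :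
    dataPolynomial (W * Wᵀ) (-(W * Zᵀ)) (Z * Zᵀ - Δ * Δᵀ) Θ =
      (Z - Θ * W) * (Z - Θ * W)ᵀ - Δ * Δᵀ := by
  simp only [dataPolynomial, transpose_sub, transpose_neg, transpose_mul, transpose_transpose,
    Matrix.sub_mul, Matrix.mul_sub, Matrix.mul_neg, Matrix.neg_mul, Matrix.mul_assoc]
  abel

end DataPolynomial

section RobustLMI

variable [Field F]

/-- The left-hand side of the robust-stabilization inequality, with `PᵀAᵀ` and `PPᵀ` in place of
`PAᵀ` and `P²` so that `P` need not be symmetric. -/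
def robustMatrix [Fintype n] [Fintype m] [Fintype p] [DecidableEq n] (A : Matrix n n F)
    (B₀ : Matrix n m F) (B₁ : Matrix n p F) (P : Matrix n n F) (Q : Matrix p p F)
    (L : Matrix n m F) (ν τ ρ₁ ρ₂ ρ₃ : F) : Matrix n n F :=
  Pᵀ * Aᵀ + A * P + L * B₀ᵀ + B₀ * Lᵀ + ν • (B₁ * Q * B₁ᵀ) + τ • 1 +
    ρ₁⁻¹ • (L * Lᵀ) + (ρ₂⁻¹ • (P * Pᵀ) + ρ₃⁻¹ • (L * Lᵀ))

/-- The lower blocks of the column on which the quadratic form of `robustLMI` is evaluated. -/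
def robustMultiplier (Θ : Matrix n k F) (B₁ : Matrix n p F) (P : Matrix n n F) (L : Matrix n m F)
    (ν ρ₁ ρ₂ ρ₃ : F) : Matrix (p ⊕ (k ⊕ (m ⊕ (n ⊕ m)))) n F :=
  fromRows (-(ν • B₁ᵀ))
    (fromRows Θᵀ (fromRows (ρ₁⁻¹ • Lᵀ) (fromRows (ρ₂⁻¹ • Pᵀ) (ρ₃⁻¹ • Lᵀ))))

variable [DecidableEq n] [DecidableEq m]

/-- The blocks `Gᵢⱼ` with `2 ≤ i, j` of the data-driven LMI matrix, for arbitrary scalar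
diagonal blocks `-ρᵢI` and for a weight `Q` in the bilinear channel that need not be `P`. -/
def robustLMITail (mA : Matrix k k F) (M₂ : Matrix k p F) (Q : Matrix p p F)
    (μ ν ρ₁ ρ₂ ρ₃ : F) :
    Matrix (p ⊕ (k ⊕ (m ⊕ (n ⊕ m)))) (p ⊕ (k ⊕ (m ⊕ (n ⊕ m)))) F :=
  fromBlocks
    ((-(1 / ν)) • Q)
    (fromCols (-M₂ᵀ) (fromCols 0 (fromCols 0 0)))
    (fromRows (-M₂) (fromRows 0 (fromRows 0 0)))
    (fromBlocks
      ((-(1 / μ)) • mA)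
      (fromCols 0 (fromCols 0 0))
      (fromRows 0 (fromRows 0 0))
      (fromBlocks
        ((-ρ₁) • 1) (fromCols 0 0) (fromRows 0 0)
        (fromBlocks ((-ρ₂) • 1) 0 0 ((-ρ₃) • 1))))

/-- The data-driven LMI matrix `G` built from the data matrices `mA`, `mB`, `mC`. -/
def robustLMI (mA : Matrix k k F) (mB : Matrix k n F) (mC : Matrix n n F) (M₁ : Matrix k n F)
    (M₂ : Matrix k p F) (P : Matrix n n F) (Q : Matrix p p F) (L : Matrix n m F)
    (μ ν τ ρ₁ ρ₂ ρ₃ : F) :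
    Matrix (n ⊕ (p ⊕ (k ⊕ (m ⊕ (n ⊕ m))))) (n ⊕ (p ⊕ (k ⊕ (m ⊕ (n ⊕ m))))) F :=
  fromBlocks
    ((-(1 / μ)) • mC + τ • 1)
    (fromCols 0 (fromCols ((M₁ - (1 / μ) • mB)ᵀ) (fromCols L (fromCols P L))))
    (fromRows 0 (fromRows (M₁ - (1 / μ) • mB) (fromRows Lᵀ (fromRows Pᵀ Lᵀ))))
    (robustLMITail mA M₂ Q μ ν ρ₁ ρ₂ ρ₃)

variable [Fintype n] [Fintype m] [Fintype p] [Fintype k]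

theorem transpose_robustMultiplier_mul_robustLMITail_mul (mA : Matrix k k F) {M₂ : Matrix k p F}
    (P : Matrix n n F) {Q : Matrix p p F} (hQ : Q.IsSymm) (L : Matrix n m F)
    {Θ : Matrix n k F} {B₁ : Matrix n p F} (hΘM₂ : Θ * M₂ = B₁ * Q)
    (μ : F) {ν ρ₁ ρ₂ ρ₃ : F} (hν : ν ≠ 0) (hρ₁ : ρ₁ ≠ 0) (hρ₂ : ρ₂ ≠ 0) (hρ₃ : ρ₃ ≠ 0) :
    (robustMultiplier Θ B₁ P L ν ρ₁ ρ₂ ρ₃)ᵀ *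
        robustLMITail (n := n) (m := m) mA M₂ Q μ ν ρ₁ ρ₂ ρ₃ *
        robustMultiplier Θ B₁ P L ν ρ₁ ρ₂ ρ₃ =
      ν • (B₁ * Q * B₁ᵀ) - (1 / μ) • (Θ * mA * Θᵀ) -
        (ρ₁⁻¹ • (L * Lᵀ) + ρ₂⁻¹ • (P * Pᵀ) + ρ₃⁻¹ • (L * Lᵀ)) := by
  have hM₂Θ : M₂ᵀ * Θᵀ = Q * B₁ᵀ := by
    rw [← transpose_mul, hΘM₂, transpose_mul, hQ.eq]
  simp only [robustMultiplier, robustLMITail, transpose_fromRows, fromCols_mul_fromRows,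
    fromCols_mul_fromBlocks_mul_fromRows, mul_fromCols, transpose_neg, transpose_smul,
    transpose_transpose, Matrix.zero_mul, Matrix.mul_zero, Matrix.mul_one, Matrix.neg_mul,
    Matrix.mul_neg, Matrix.smul_mul, Matrix.mul_smul, add_zero, hΘM₂, hM₂Θ, Matrix.mul_assoc B₁]
  match_scalars <;> field_simp <;> ring

theorem robustLMI_congr_robustMultiplier (mA : Matrix k k F) (mB : Matrix k n F)
    (mC : Matrix n n F) {M₁ : Matrix k n F} {M₂ : Matrix k p F} {A : Matrix n n F}
    {B₀ : Matrix n m F} {B₁ : Matrix n p F} {P : Matrix n n F} {Q : Matrix p p F}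
    (hQ : Q.IsSymm) {L : Matrix n m F} {Θ : Matrix n k F} (hΘM₁ : Θ * M₁ = A * P + B₀ * Lᵀ)
    (hΘM₂ : Θ * M₂ = B₁ * Q) (μ τ : F) {ν ρ₁ ρ₂ ρ₃ : F} (hν : ν ≠ 0) (hρ₁ : ρ₁ ≠ 0)
    (hρ₂ : ρ₂ ≠ 0) (hρ₃ : ρ₃ ≠ 0) :
    (fromRows (1 : Matrix n n F) (robustMultiplier Θ B₁ P L ν ρ₁ ρ₂ ρ₃))ᵀ *
        robustLMI mA mB mC M₁ M₂ P Q L μ ν τ ρ₁ ρ₂ ρ₃ *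
        fromRows (1 : Matrix n n F) (robustMultiplier Θ B₁ P L ν ρ₁ ρ₂ ρ₃) =
      robustMatrix A B₀ B₁ P Q L ν τ ρ₁ ρ₂ ρ₃ - (1 / μ) • dataPolynomial mA mB mC Θ := by
  have hM₁Θ : M₁ᵀ * Θᵀ = Pᵀ * Aᵀ + L * B₀ᵀ := by
    rw [← transpose_mul, hΘM₁, transpose_add, transpose_mul, transpose_mul, transpose_transpose]
  rw [robustLMI, transpose_fromRows, fromCols_mul_fromBlocks_mul_fromRows,
    transpose_robustMultiplier_mul_robustLMITail_mul mA P hQ L hΘM₂ μ hν hρ₁ hρ₂ hρ₃]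
  simp only [robustMultiplier, robustMatrix, dataPolynomial, transpose_fromRows,
    fromCols_mul_fromRows, transpose_one, transpose_sub, transpose_neg, transpose_smul,
    transpose_transpose, Matrix.one_mul, Matrix.mul_one, Matrix.zero_mul, Matrix.mul_zero,
    Matrix.sub_mul, Matrix.mul_sub, Matrix.smul_mul, Matrix.mul_smul, zero_add, hΘM₁, hM₁Θ]
  module

end RobustLMI

theorem theorem1_direct_data_driven_general [Fintype n] [Fintype m] [Fintype p] [Fintype q]
    [Fintype t] [DecidableEq n] [DecidableEq m] {Z₀ : Matrix n t ℝ} {U₀ : Matrix m t ℝ}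
    {V₀ : Matrix p t ℝ} {Z₁ : Matrix n t ℝ} {Δ : Matrix n q ℝ} {W₀ : Matrix (n ⊕ (m ⊕ p)) t ℝ}
    (hW₀ : W₀ = fromRows Z₀ (fromRows U₀ V₀)) {P : Matrix n n ℝ} {Q : Matrix p p ℝ}
    (hQ : Q.IsSymm) {L : Matrix n m ℝ} {μ ν τ ρ₁ ρ₂ ρ₃ : ℝ} (hμ : 0 < μ) (hν : ν ≠ 0)
    (hρ₁ : ρ₁ ≠ 0) (hρ₂ : ρ₂ ≠ 0) (hρ₃ : ρ₃ ≠ 0)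
    (hG : (-robustLMI (W₀ * W₀ᵀ) (-(W₀ * Z₁ᵀ)) (Z₁ * Z₁ᵀ - Δ * Δᵀ) (fromRows P (fromRows Lᵀ 0))
      (fromRows 0 (fromRows 0 Q)) P Q L μ ν τ ρ₁ ρ₂ ρ₃).PosDef)
    (A : Matrix n n ℝ) (B₁ : Matrix n p ℝ) (B₀ : Matrix n m ℝ) (D₀ : Matrix n t ℝ)
    (hD₀ : (Δ * Δᵀ - D₀ * D₀ᵀ).PosSemidef) (hZ₁ : Z₁ = A * Z₀ + B₀ * U₀ + B₁ * V₀ + D₀) :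
    (-robustMatrix A B₀ B₁ P Q L ν τ ρ₁ ρ₂ ρ₃).PosDef := by
  set Θ : Matrix n (n ⊕ (m ⊕ p)) ℝ := fromCols A (fromCols B₀ B₁)
  have hΘM₁ : Θ * fromRows P (fromRows Lᵀ (0 : Matrix p n ℝ)) = A * P + B₀ * Lᵀ := by
    simp only [Θ, fromCols_mul_fromRows, Matrix.mul_zero, add_zero]
  have hΘM₂ : Θ * fromRows (0 : Matrix n p ℝ) (fromRows (0 : Matrix m p ℝ) Q) = B₁ * Q := by
    simp only [Θ, fromCols_mul_fromRows, Matrix.mul_zero, zero_add]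
  have residual_eq : Z₁ - Θ * W₀ = D₀ := by
    simp only [hZ₁, hW₀, Θ, fromCols_mul_fromRows, ← add_assoc, add_sub_cancel_left]
  have data_nonpos :
      (-dataPolynomial (W₀ * W₀ᵀ) (-(W₀ * Z₁ᵀ)) (Z₁ * Z₁ᵀ - Δ * Δᵀ) Θ).PosSemidef := by
    rwa [dataPolynomial_eq_residual_sub_noise, residual_eq, neg_sub]
  have congr_posDef := posDef_conjTranspose_fromRows_one_mul_mul_fromRows_one hG
    (robustMultiplier Θ B₁ P L ν ρ₁ ρ₂ ρ₃)
  rw [conjTranspose_eq_transpose_of_trivial, Matrix.mul_neg, Matrix.neg_mul,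
    robustLMI_congr_robustMultiplier _ _ _ hQ hΘM₁ hΘM₂ μ τ hν hρ₁ hρ₂ hρ₃] at congr_posDef
  convert congr_posDef.add_posSemidef (data_nonpos.smul (one_div_pos.mpr hμ).le) using 1
  module

/-- **Matrix-analytic core of Theorem 1 (direct data-driven control, single-input
case).**  If the `6×6` block LMI matrix `G` (block sizes `N, N, 2N+1, 1, N, 1`)
built from the noisy data is negative definite, then every bilinear system
`(A, B₀, B₁)` consistent with the noisy data (i.e. `Z₁ = AZ₀ + B₀U₀ + B₁V₀ + D₀`
for some `D₀` with `D₀D₀ᵀ ⪯ ΔΔᵀ`) satisfies the robust-stabilization matrix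
inequality of Proposition 1. -/
theorem theorem1_direct_data_driven {N T : ℕ} (hN : 0 < N) (hT : 0 < T)
    (Z₀ : Matrix (Fin N) (Fin T) ℝ) (U₀ : Matrix (Fin 1) (Fin T) ℝ)
    (V₀ : Matrix (Fin N) (Fin T) ℝ) (Z₁ : Matrix (Fin N) (Fin T) ℝ)
    (Δ : Matrix (Fin N) (Fin N) ℝ)
    (W₀ : Matrix (Fin N ⊕ (Fin 1 ⊕ Fin N)) (Fin T) ℝ)
    (hW₀ : W₀ = fromRows Z₀ (fromRows U₀ V₀))
    (hW₀rank : W₀.rank = 2 * N + 1)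
    (mA : Matrix (Fin N ⊕ (Fin 1 ⊕ Fin N)) (Fin N ⊕ (Fin 1 ⊕ Fin N)) ℝ)
    (hmA : mA = W₀ * W₀ᵀ)
    (mB : Matrix (Fin N ⊕ (Fin 1 ⊕ Fin N)) (Fin N) ℝ)
    (hmB : mB = -(W₀ * Z₁ᵀ))
    (mC : Matrix (Fin N) (Fin N) ℝ)
    (hmC : mC = Z₁ * Z₁ᵀ - Δ * Δᵀ)
    (P : Matrix (Fin N) (Fin N) ℝ) (hP : P.IsSymm) (hPpd : P.PosDef)
    (L : Matrix (Fin N) (Fin 1) ℝ)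
    (μ ν τ c c₁ c₂ α β : ℝ)
    (hμ : 0 < μ) (hν : 0 < ν) (hτ : 0 < τ) (hc : 0 < c) (hc₁ : 0 < c₁)
    (hc₂ : 0 < c₂) (hα : 0 < α) (hβ : 0 < β) (hαβ : 1 / α + 1 / β = 1)
    (M₁ : Matrix (Fin N ⊕ (Fin 1 ⊕ Fin N)) (Fin N) ℝ)
    (hM₁ : M₁ = fromRows P (fromRows Lᵀ (0 : Matrix (Fin N) (Fin N) ℝ)))
    (M₂ : Matrix (Fin N ⊕ (Fin 1 ⊕ Fin N)) (Fin N) ℝ)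
    (hM₂ : M₂ = fromRows (0 : Matrix (Fin N) (Fin N) ℝ)
      (fromRows (0 : Matrix (Fin 1) (Fin N) ℝ) P))
    (G : Matrix
      (Fin N ⊕ (Fin N ⊕ ((Fin N ⊕ (Fin 1 ⊕ Fin N)) ⊕ (Fin 1 ⊕ (Fin N ⊕ Fin 1)))))
      (Fin N ⊕ (Fin N ⊕ ((Fin N ⊕ (Fin 1 ⊕ Fin N)) ⊕ (Fin 1 ⊕ (Fin N ⊕ Fin 1))))) ℝ)
    (hG : G =
      fromBlocks
        ((-(1 / μ)) • mC + τ • (1 : Matrix (Fin N) (Fin N) ℝ))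
        (fromCols (0 : Matrix (Fin N) (Fin N) ℝ)
          (fromCols ((M₁ - (1 / μ) • mB)ᵀ)
            (fromCols L (fromCols P L))))
        (fromRows (0 : Matrix (Fin N) (Fin N) ℝ)
          (fromRows (M₁ - (1 / μ) • mB)
            (fromRows Lᵀ (fromRows Pᵀ Lᵀ))))
        (fromBlocks
          ((-(1 / ν)) • P)
          (fromCols (-M₂ᵀ)
            (fromCols (0 : Matrix (Fin N) (Fin 1) ℝ)
              (fromCols (0 : Matrix (Fin N) (Fin N) ℝ) (0 : Matrix (Fin N) (Fin 1) ℝ))))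
          (fromRows (-M₂)
            (fromRows (0 : Matrix (Fin 1) (Fin N) ℝ)
              (fromRows (0 : Matrix (Fin N) (Fin N) ℝ) (0 : Matrix (Fin 1) (Fin N) ℝ))))
          (fromBlocks
            ((-(1 / μ)) • mA)
            (fromCols (0 : Matrix (Fin N ⊕ (Fin 1 ⊕ Fin N)) (Fin 1) ℝ)
              (fromCols (0 : Matrix (Fin N ⊕ (Fin 1 ⊕ Fin N)) (Fin N) ℝ)
                (0 : Matrix (Fin N ⊕ (Fin 1 ⊕ Fin N)) (Fin 1) ℝ)))
            (fromRows (0 : Matrix (Fin 1) (Fin N ⊕ (Fin 1 ⊕ Fin N)) ℝ)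
              (fromRows (0 : Matrix (Fin N) (Fin N ⊕ (Fin 1 ⊕ Fin N)) ℝ)
                (0 : Matrix (Fin 1) (Fin N ⊕ (Fin 1 ⊕ Fin N)) ℝ)))
            (fromBlocks
              ((-(ν / c)) • (1 : Matrix (Fin 1) (Fin 1) ℝ))
              (fromCols (0 : Matrix (Fin 1) (Fin N) ℝ) (0 : Matrix (Fin 1) (Fin 1) ℝ))
              (fromRows (0 : Matrix (Fin N) (Fin 1) ℝ) (0 : Matrix (Fin 1) (Fin 1) ℝ))
              (fromBlocks
                ((-(τ / (α * c₁ ^ 2))) • (1 : Matrix (Fin N) (Fin N) ℝ))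
                (0 : Matrix (Fin N) (Fin 1) ℝ)
                (0 : Matrix (Fin 1) (Fin N) ℝ)
                ((-(τ / (β * c₂ ^ 2))) • (1 : Matrix (Fin 1) (Fin 1) ℝ)))))))
    (hGneg : (-G).PosDef) :
    ∀ (A B₁ : Matrix (Fin N) (Fin N) ℝ) (B₀ : Matrix (Fin N) (Fin 1) ℝ)
      (D₀ : Matrix (Fin N) (Fin T) ℝ),
      (Δ * Δᵀ - D₀ * D₀ᵀ).PosSemidef →
      Z₁ = A * Z₀ + B₀ * U₀ + B₁ * V₀ + D₀ →
      (-(P * Aᵀ + A * P + L * B₀ᵀ + B₀ * Lᵀ + ν • (B₁ * P * B₁ᵀ) +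
          τ • (1 : Matrix (Fin N) (Fin N) ℝ) + (ν⁻¹ * c) • (L * Lᵀ) +
          τ⁻¹ • ((α * c₁ ^ 2) • (P * P) + (β * c₂ ^ 2) • (L * Lᵀ)))).PosDef := by
  intro A B₁ B₀ D₀ hD₀ hZ₁
  subst hmA hmB hmC hM₁ hM₂ hG
  have robust := theorem1_direct_data_driven_general hW₀ hP hμ hν.ne' (by positivity)
    (by positivity) (by positivity) hGneg A B₁ B₀ D₀ hD₀ hZ₁
  simpa only [robustMatrix, hP.eq, inv_div, ← div_eq_inv_mul, smul_add, smul_smul] using robust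
end
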